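/- Let Ω be a domain (nonempty open connected set) in ℝⁿ (n ≥ 2) whose boundary ∂Ω is κ-porous, let 1 < p < ∞, 1 ≤ q < ∞ and s > 0. Then there is a constant c (depending on p, q, s, n, κ and ∂Ω) such that for every f ∈ F^s_{pq}(ℝⁿ), ‖f·χ_Ω‖_{F^s_{pq}(ℝⁿ)} ≤ c ( ‖f‖_{F^s_{pq}(ℝⁿ)} + (∫_Ω |f(y)|^p / dist(y,∂Ω)^{sp} dy)^{1/p} ), as an inequality in [0,∞], where χ_Ω is the characteristic function of Ω. -/

import Mathlib

open MeasureTheory Metric Set Filter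
open scoped ENNReal NNReal Topology

noncomputable section

/-- ℝⁿ, with the sup-norm (given by the product metric on `Fin n → ℝ`). -/
abbrev Rn (n : ℕ) := Fin n → ℝ

/-- `S` is `κ`-porous. -/
def IsPorous {n : ℕ} (κ : ℝ) (S : Set (Rn n)) : Prop :=
  1 ≤ κ ∧ ∀ (x : Rn n) (r : ℝ), 0 < r → r ≤ 1 →
    ∃ y ∈ closedBall x r, closedBall y (r / κ) ∩ S = ∅

/-- The normalized local best approximation `ℰ_k(f, Q(x,r))_{L^u}`. -/
def localApprox {n : ℕ} (k : ℕ) (u : ℝ) (f : Rn n → ℝ) (x : Rn n) (r : ℝ) : ℝ≥0∞ :=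
  ⨅ (P : MvPolynomial (Fin n) ℝ) (_ : P.totalDegree ≤ k - 1),
    ((volume (closedBall x r))⁻¹ *
      ∫⁻ y in closedBall x r, ENNReal.ofReal |f y - MvPolynomial.eval y P| ^ u) ^ (1 / u)

/-- The Triebel–Lizorkin norm `‖f‖_{F^s_{pq}}` (with `k = [s]+1`). -/
def tlNorm {n : ℕ} (s p q : ℝ) (f : Rn n → ℝ) : ℝ≥0∞ :=
  (∫⁻ x, ENNReal.ofReal |f x| ^ p) ^ (1 / p) +
  (∫⁻ x, ((∫⁻ t in Set.Ioo (0:ℝ) 1,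
      (ENNReal.ofReal (t ^ (-s)) * localApprox (⌊s⌋₊ + 1) 1 f x t) ^ q
        * ENNReal.ofReal t⁻¹) ^ (1 / q)) ^ p) ^ (1 / p)

/-!
If `t < dist(x, ∂Ω)`, then the cube `Q(x, t)` misses `∂Ω`, so `f χ_Ω` is either `f` or `0` on it and
its local best approximation is at most that of `f`. If `t ≥ dist(x, ∂Ω)`, only the mean of
`|f χ_Ω|` over `Q(x, t)` is kept; integrating these means in `t` yields a Riesz-type potential
truncated at the distance `dist(x, ∂Ω)`. Since `dist(·, ∂Ω)` is 1-Lipschitz, the truncation may be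
moved from `x` to `y`, which turns the potential into a Poisson-type kernel at scale
`dist(y, ∂Ω)` acting on `|f| / dist(·, ∂Ω)^s`. The transpose of this operator averages over scales
at least `dist(y, ∂Ω)` around `y` and is pointwise bounded by the Hardy–Littlewood maximal function,
so both are bounded on the Lebesgue spaces by duality.
-/

section PowerIntegrals

theorem lintegral_Ici_rpow {m a : ℝ} (hm : 0 < m) (ha : 0 < a) :
    ∫⁻ t in Ici m, ENNReal.ofReal (t ^ (-a - 1)) = ENNReal.ofReal (m ^ (-a) / a) := by
  rw [setLIntegral_congr Ioi_ae_eq_Ici.symm, ← ofReal_integral_eq_lintegral_ofReal,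
    integral_Ioi_rpow_of_lt (by linarith) hm, sub_add_cancel, neg_div_neg_eq]
  · exact integrableOn_Ioi_rpow_of_lt (by linarith) hm
  · filter_upwards [ae_restrict_mem measurableSet_Ioi] with t ht
    exact Real.rpow_nonneg (hm.trans ht).le _

theorem lintegral_Ioi_zero_rpow (a : ℝ) : ∫⁻ t in Ioi (0 : ℝ), ENNReal.ofReal (t ^ a) = ⊤ := by
  by_contra h
  refine not_integrableOn_Ioi_rpow a ((lintegral_ofReal_ne_top_iff_integrable ?_ ?_).1 h)
  · exact (measurable_id.pow_const a).aestronglyMeasurable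
  · filter_upwards [ae_restrict_mem measurableSet_Ioi] with t ht
    exact Real.rpow_nonneg (mem_Ioi.1 ht).le _

variable {α : Type*} [MeasurableSpace α] {μ : Measure α}

/- Where `f` is infinite on a set of positive measure both sides are `∞`; otherwise this is the
real-valued layer-cake formula. -/
theorem lintegral_rpow_eq_lintegral_measure_lt {f : α → ℝ≥0∞} (hf : Measurable f) {r : ℝ}
    (hr : 0 < r) :
    ∫⁻ x, f x ^ r ∂μ = ENNReal.ofReal r *
      ∫⁻ t in Ioi (0 : ℝ), μ {x | ENNReal.ofReal t < f x} * ENNReal.ofReal (t ^ (r - 1)) := by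
  by_cases htop : μ {x | f x = ⊤} = 0
  · have hfin : ∀ᵐ x ∂μ, f x ≠ ⊤ := by simpa [ae_iff] using htop
    have hlevel : ∀ t ∈ Ioi (0 : ℝ), μ {x | t < (f x).toReal} * ENNReal.ofReal (t ^ (r - 1)) =
        μ {x | ENNReal.ofReal t < f x} * ENNReal.ofReal (t ^ (r - 1)) := by
      intro t ht
      congr 1
      refine measure_congr ?_
      filter_upwards [hfin] with x hx
      exact propext (ENNReal.ofReal_lt_iff_lt_toReal (mem_Ioi.1 ht).le hx).symm
    rw [← setLIntegral_congr_fun measurableSet_Ioi hlevel,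
      ← lintegral_rpow_eq_lintegral_meas_lt_mul μ (ae_of_all _ fun x => ENNReal.toReal_nonneg)
        hf.ennreal_toReal.aemeasurable hr]
    refine lintegral_congr_ae ?_
    filter_upwards [hfin] with x hx
    rw [← ENNReal.ofReal_rpow_of_nonneg ENNReal.toReal_nonneg hr.le, ENNReal.ofReal_toReal hx]
  · have hlhs : ∫⁻ x, f x ^ r ∂μ = ⊤ := by
      refine lintegral_eq_top_of_measure_eq_top_ne_zero (hf.pow_const r).aemeasurable ?_
      simpa [ENNReal.rpow_eq_top_iff, hr, hr.le, hr.not_gt] using htop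
    have hrhs : ⊤ ≤ ∫⁻ t in Ioi (0 : ℝ),
        μ {x | ENNReal.ofReal t < f x} * ENNReal.ofReal (t ^ (r - 1)) := calc
      ⊤ = ∫⁻ t in Ioi (0 : ℝ), μ {x | f x = ⊤} * ENNReal.ofReal (t ^ (r - 1)) := by
        rw [lintegral_const_mul _ (by fun_prop), lintegral_Ioi_zero_rpow, ENNReal.mul_top htop]
      _ ≤ _ := by
        gcongr with t x
        intro hx
        exact hx ▸ ENNReal.ofReal_lt_top
    rw [hlhs, top_le_iff.1 hrhs, ENNReal.mul_top (by simpa using hr)]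

end PowerIntegrals

section LebesgueNorms

variable {α β : Type*} [MeasurableSpace α] [MeasurableSpace β] {μ : Measure α} {ν : Measure β}

theorem lintegral_Lp_const_mul {p : ℝ} (hp : 0 < p) {c : ℝ≥0∞} (hc : c ≠ ⊤)
    (f : α → ℝ≥0∞) :
    (∫⁻ x, (c * f x) ^ p ∂μ) ^ (1 / p) = c * (∫⁻ x, f x ^ p ∂μ) ^ (1 / p) := by
  simp_rw [ENNReal.mul_rpow_of_nonneg _ _ hp.le]
  rw [lintegral_const_mul' _ _ (ENNReal.rpow_ne_top_of_nonneg hp.le hc),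
    ENNReal.mul_rpow_of_nonneg _ _ (one_div_pos.2 hp).le, ← ENNReal.rpow_mul,
    mul_one_div_cancel hp.ne', ENNReal.rpow_one]

theorem lintegral_indicator_div_rpow {Ω : Set α} (hΩ : MeasurableSet Ω) {δ : α → ℝ}
    (hδ : ∀ y ∈ Ω, 0 < δ y) {p : ℝ} (hp : 0 < p) (s : ℝ) (f : α → ℝ) :
    ∫⁻ y, (ENNReal.ofReal |Ω.indicator f y| / ENNReal.ofReal (δ y ^ s)) ^ p ∂μ =
      ∫⁻ y in Ω, ENNReal.ofReal (|f y| ^ p / δ y ^ (s * p)) ∂μ := by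
  rw [← lintegral_indicator hΩ]
  refine lintegral_congr fun y => ?_
  by_cases hy : y ∈ Ω
  · have hy0 := hδ y hy
    rw [indicator_of_mem hy, indicator_of_mem hy, ← ENNReal.ofReal_div_of_pos (by positivity),
      ENNReal.ofReal_rpow_of_nonneg (by positivity) hp.le, Real.div_rpow (by positivity)
      (by positivity), ← Real.rpow_mul hy0.le]
  · simp [hy, hp]

theorem lintegral_withDensity_const_mul_rpow {G : α → ℝ≥0∞} (hG : Measurable G) (c : ℝ≥0∞) {r : ℝ}
    (hr : 0 ≤ r) :
    ∫⁻ x, (c * G x) ^ r ∂μ.withDensity G = c ^ r * ∫⁻ x, G x ^ (r + 1) ∂μ := by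
  rw [lintegral_withDensity_eq_lintegral_mul _ hG ((hG.const_mul c).pow_const _),
    ← lintegral_const_mul _ (hG.pow_const _)]
  refine lintegral_congr fun x => ?_
  rw [Pi.mul_apply, ENNReal.mul_rpow_of_nonneg _ _ hr,
    ENNReal.rpow_add_of_nonneg _ _ hr zero_le_one, ENNReal.rpow_one]
  ring

theorem half_mul_measure_le_setLIntegral_of_mul_lt {G : α → ℝ≥0∞} {l : ℝ≥0∞} {B : Set α}
    (h : l * μ B < ∫⁻ x in B, G x ∂μ) :
    l / 2 * μ B ≤ ∫⁻ x in B, {x | l < 2 * G x}.indicator G x ∂μ := by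
  have hsplit : ∫⁻ x in B, G x ∂μ ≤
      ∫⁻ x in B, {x | l < 2 * G x}.indicator G x ∂μ + l / 2 * μ B := by
    rw [← setLIntegral_const, ← lintegral_add_right _ measurable_const]
    refine lintegral_mono fun x => ?_
    by_cases hx : l < 2 * G x
    · simp [indicator_of_mem (show x ∈ {x | l < 2 * G x} from hx)]
    · rw [indicator_of_notMem (show x ∉ {x | l < 2 * G x} from hx), zero_add,
        ENNReal.le_div_iff_mul_le (by simp) (by simp), mul_comm]
      exact not_lt.1 hx
  refine (lt_of_add_lt_add_right (a := l / 2 * μ B) ?_).le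
  calc l / 2 * μ B + l / 2 * μ B = l * μ B := by rw [← add_mul, ENNReal.add_halves]
    _ < _ := h.trans_le hsplit

theorem lintegral_Lp_add_le_of_measurable_right {p : ℝ} (hp : 1 ≤ p) (f : α → ℝ≥0∞)
    {g : α → ℝ≥0∞} (hg : Measurable g) :
    (∫⁻ x, (f x + g x) ^ p ∂μ) ^ (1 / p) ≤
      (∫⁻ x, f x ^ p ∂μ) ^ (1 / p) + (∫⁻ x, g x ^ p ∂μ) ^ (1 / p) := by
  have hp0 : 0 < p := by linarith
  -- `f` need not be measurable, so it is replaced by `φ ^ (1 / p) - g`, where `φ` is a measurable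
  -- minorant of `(f + g) ^ p` with the same integral.
  obtain ⟨φ, hφ, hφle, hφeq⟩ := exists_measurable_le_lintegral_eq μ fun x => (f x + g x) ^ p
  have hroot (x : α) : φ x ^ (1 / p) ≤ f x + g x := by
    rw [one_div, ENNReal.rpow_inv_le_iff hp0]
    exact hφle x
  have hsub : Measurable fun x => φ x ^ (1 / p) - g x := (hφ.pow_const _).sub hg
  calc (∫⁻ x, (f x + g x) ^ p ∂μ) ^ (1 / p)
      = (∫⁻ x, (φ x ^ (1 / p)) ^ p ∂μ) ^ (1 / p) := by
        simp_rw [hφeq, ← ENNReal.rpow_mul, one_div_mul_cancel hp0.ne', ENNReal.rpow_one]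
    _ ≤ (∫⁻ x, ((φ x ^ (1 / p) - g x) + g x) ^ p ∂μ) ^ (1 / p) := by
        gcongr
        exact le_tsub_add
    _ ≤ (∫⁻ x, (φ x ^ (1 / p) - g x) ^ p ∂μ) ^ (1 / p) + (∫⁻ x, g x ^ p ∂μ) ^ (1 / p) :=
        ENNReal.lintegral_Lp_add_le hsub.aemeasurable hg.aemeasurable hp
    _ ≤ _ := by
        gcongr with x
        exact tsub_le_iff_right.2 (hroot x)

theorem exists_simpleFunc_le_lt_lintegral [SigmaFinite μ] {f : α → ℝ≥0∞} {L : ℝ≥0∞}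
    (hL : L < ∫⁻ x, f x ∂μ) :
    ∃ φ : SimpleFunc α ℝ≥0, (∀ x, (φ x : ℝ≥0∞) ≤ f x) ∧ ∫⁻ x, φ x ∂μ < ⊤ ∧ L < ∫⁻ x, φ x ∂μ := by
  simp_rw [lintegral_eq_nnreal, lt_iSup_iff] at hL
  obtain ⟨ψ, hψf, hLψ⟩ := hL
  rw [← SimpleFunc.lintegral_eq_lintegral] at hLψ
  obtain ⟨φ, hφψ, hφtop, hLφ⟩ := SimpleFunc.exists_lt_lintegral_simpleFunc_of_lt_lintegral hLψ
  exact ⟨φ, fun x => (ENNReal.coe_le_coe.2 (hφψ x)).trans (hψf x), hφtop, hLφ⟩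

theorem lintegral_rpow_le_of_forall_lintegral_mul_le [SigmaFinite μ] {p q : ℝ}
    (hpq : p.HolderConjugate q) {f : α → ℝ≥0∞} {A : ℝ≥0∞}
    (h : ∀ g : α → ℝ≥0∞, Measurable g → ∫⁻ x, f x * g x ∂μ ≤ A * (∫⁻ x, g x ^ q ∂μ) ^ (1 / q)) :
    (∫⁻ x, f x ^ p ∂μ) ^ (1 / p) ≤ A := by
  have hp0 := hpq.pos
  have hq0 := hpq.symm.pos
  have hsum : 1 / p + 1 / q = 1 := by simpa using hpq.inv_add_inv_eq_one
  by_contra! hA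
  rw [one_div, ENNReal.lt_rpow_inv_iff hp0] at hA
  obtain ⟨φ, hφf, hφtop, hAφ⟩ := exists_simpleFunc_le_lt_lintegral hA
  set X := ∫⁻ x, φ x ∂μ with hX
  have hX0 : X ≠ 0 := (zero_le.trans_lt hAφ).ne'
  have hXA : X ≤ A * X ^ (1 / q) := calc
    X = ∫⁻ x, (φ x : ℝ≥0∞) ^ (1 / p) * (φ x : ℝ≥0∞) ^ (1 / q) ∂μ := by
      simp_rw [← ENNReal.rpow_add_of_nonneg _ _ (one_div_pos.2 hp0).le (one_div_pos.2 hq0).le,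
        hsum, ENNReal.rpow_one, hX]
    _ ≤ ∫⁻ x, f x * (φ x : ℝ≥0∞) ^ (1 / q) ∂μ := by
      gcongr with x
      rw [one_div, ENNReal.rpow_inv_le_iff hp0]
      exact hφf x
    _ ≤ A * (∫⁻ x, ((φ x : ℝ≥0∞) ^ (1 / q)) ^ q ∂μ) ^ (1 / q) :=
      h _ (φ.measurable.coe_nnreal_ennreal.pow_const _)
    _ = A * X ^ (1 / q) := by
      simp_rw [← ENNReal.rpow_mul, one_div_mul_cancel hq0.ne', ENNReal.rpow_one, hX]
  have hXq : X ^ (1 / q) ≠ 0 := (ENNReal.rpow_pos (pos_iff_ne_zero.2 hX0) hφtop.ne).ne'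
  have hXq' : X ^ (1 / q) ≠ ⊤ := ENNReal.rpow_ne_top_of_nonneg (one_div_pos.2 hq0).le hφtop.ne
  have hle : X ^ (1 / p) ≤ A := by
    rwa [← ENNReal.mul_le_mul_iff_left hXq hXq', ← ENNReal.rpow_add _ _ hX0 hφtop.ne, hsum,
      ENNReal.rpow_one]
  rw [one_div, ENNReal.rpow_inv_le_iff hp0] at hle
  exact hAφ.not_ge hle

theorem lintegral_kernel_rpow_le_of_transpose [SigmaFinite μ] [SFinite ν] {p q : ℝ}
    (hpq : p.HolderConjugate q) {K : α → β → ℝ≥0∞} (hK : Measurable (Function.uncurry K))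
    {C : ℝ≥0∞}
    (hC : ∀ g : α → ℝ≥0∞, Measurable g →
      (∫⁻ y, (∫⁻ x, K x y * g x ∂μ) ^ q ∂ν) ^ (1 / q) ≤ C * (∫⁻ x, g x ^ q ∂μ) ^ (1 / q))
    {h : β → ℝ≥0∞} (hh : Measurable h) :
    (∫⁻ x, (∫⁻ y, K x y * h y ∂ν) ^ p ∂μ) ^ (1 / p) ≤ C * (∫⁻ y, h y ^ p ∂ν) ^ (1 / p) := by
  have hKx (x : α) : Measurable (K x) := hK.comp measurable_prodMk_left
  have hKy (y : β) : Measurable fun x => K x y := hK.comp measurable_prodMk_right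
  refine lintegral_rpow_le_of_forall_lintegral_mul_le hpq fun g hg => ?_
  have hKg : Measurable fun y => ∫⁻ x, K x y * g x ∂μ :=
    (hK.mul (hg.comp measurable_fst)).lintegral_prod_left'
  have hKhg : Measurable fun z : α × β => K z.1 z.2 * h z.2 * g z.1 :=
    (hK.mul (hh.comp measurable_snd)).mul (hg.comp measurable_fst)
  calc ∫⁻ x, (∫⁻ y, K x y * h y ∂ν) * g x ∂μ
      = ∫⁻ x, ∫⁻ y, K x y * h y * g x ∂ν ∂μ := by
        refine lintegral_congr fun x => ?_
        rw [lintegral_mul_const _ (by fun_prop)]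
    _ = ∫⁻ y, ∫⁻ x, K x y * h y * g x ∂μ ∂ν := lintegral_lintegral_swap hKhg.aemeasurable
    _ = ∫⁻ y, h y * ∫⁻ x, K x y * g x ∂μ ∂ν := by
        refine lintegral_congr fun y => ?_
        rw [← lintegral_const_mul _ (by fun_prop)]
        simp only [mul_assoc, mul_left_comm]
    _ ≤ (∫⁻ y, h y ^ p ∂ν) ^ (1 / p) * (∫⁻ y, (∫⁻ x, K x y * g x ∂μ) ^ q ∂ν) ^ (1 / q) :=
        ENNReal.lintegral_mul_le_Lp_mul_Lq ν hpq hh.aemeasurable hKg.aemeasurable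
    _ ≤ (∫⁻ y, h y ^ p ∂ν) ^ (1 / p) * (C * (∫⁻ x, g x ^ q ∂μ) ^ (1 / q)) := by
        gcongr
        exact hC g hg
    _ = _ := by ring

end LebesgueNorms

section MaximalFunction

variable {X : Type*} [PseudoMetricSpace X] [MeasurableSpace X] {μ : Measure X} {G : X → ℝ≥0∞}

theorem measure_le_lintegral_of_forall_exists_closedBall [OpensMeasurableSpace X]
    [TopologicalSpace.SeparableSpace X] {A : Set X} {F : X → ℝ≥0∞}
    (hA : ∀ y ∈ A, ∃ ρ > 0, μ (closedBall y (5 * ρ)) ≤ ∫⁻ x in closedBall y ρ, F x ∂μ) :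
    μ A ≤ ∫⁻ x, F x ∂μ := by
  choose! ρ hρ hρF using hA
  -- The covering theorem wants bounded radii, so `A` is exhausted by sets with this property.
  let A' (N : ℕ) : Set X := {y ∈ A | ρ y ≤ N}
  have hbounded (N : ℕ) : μ (A' N) ≤ ∫⁻ x, F x ∂μ := by
    obtain ⟨u, huA, hdisj, hcov⟩ :=
      Vitali.exists_disjoint_subfamily_covering_enlargement_closedBall (A' N) id ρ N
        (fun y hy => hy.2) 5 (by norm_num)
    have hu : u.Countable := hdisj.countable_of_nonempty_interior fun y hy =>
      ⟨y, ball_subset_interior_closedBall (mem_ball_self (hρ y (huA hy).1))⟩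
    have hsub : A' N ⊆ ⋃ b ∈ u, closedBall b (5 * ρ b) := fun y hy => by
      obtain ⟨b, hb, hyb⟩ := hcov y hy
      exact mem_biUnion hb (hyb (mem_closedBall_self (hρ y hy.1).le))
    calc μ (A' N) ≤ ∑' b : u, μ (closedBall (b : X) (5 * ρ b)) :=
          (measure_mono hsub).trans (measure_biUnion_le _ hu _)
      _ ≤ ∑' b : u, ∫⁻ x in closedBall (b : X) (ρ b), F x ∂μ :=
          ENNReal.tsum_le_tsum fun b => hρF b (huA b.2).1
      _ = ∫⁻ x in ⋃ b ∈ u, closedBall b (ρ b), F x ∂μ :=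
          (lintegral_biUnion hu (fun _ _ => measurableSet_closedBall) hdisj _).symm
      _ ≤ ∫⁻ x, F x ∂μ := setLIntegral_le_lintegral _ _
  have hmono : Monotone A' := fun N M hNM y hy => ⟨hy.1, hy.2.trans (Nat.cast_le.2 hNM)⟩
  have hunion : A = ⋃ N, A' N := by
    ext y
    simpa [A'] using fun _ => exists_nat_ge (ρ y)
  rw [hunion, hmono.measure_iUnion]
  exact iSup_le hbounded

/-- The centred Hardy–Littlewood maximal function of `G` over closed balls of all radii; it
controls convolution-type operators uniformly in their scale. -/
def maximalFunction (μ : Measure X) (G : X → ℝ≥0∞) (y : X) : ℝ≥0∞ :=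
  ⨆ (ρ : ℝ) (_ : 0 < ρ), ⨍⁻ x in closedBall y ρ, G x ∂μ

theorem measure_lt_maximalFunction_le [OpensMeasurableSpace X]
    [TopologicalSpace.SeparableSpace X] {D : ℝ≥0}
    (hD : ∀ y ρ, 0 < ρ → μ (closedBall y (5 * ρ)) ≤ D * μ (closedBall y ρ)) (hG : Measurable G)
    {l : ℝ≥0∞} (hl : l ≠ 0) (hl' : l ≠ ⊤) :
    μ {y | l < maximalFunction μ G y} ≤ 2 * D / l * ∫⁻ x in {x | l < 2 * G x}, G x ∂μ := by
  have hset : MeasurableSet {x | l < 2 * G x} := measurableSet_lt measurable_const (hG.const_mul 2)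
  have hind : Measurable ({x | l < 2 * G x}.indicator G) := hG.indicator hset
  rw [← lintegral_indicator hset, ← lintegral_const_mul _ hind]
  refine measure_le_lintegral_of_forall_exists_closedBall fun y hy => ?_
  obtain ⟨ρ, hρ, hlρ⟩ : ∃ ρ > 0, l < ⨍⁻ x in closedBall y ρ, G x ∂μ := by
    simpa only [mem_ofPred_eq, maximalFunction, lt_iSup_iff, exists_prop] using hy
  rw [setLAverage_eq] at hlρ
  refine ⟨ρ, hρ, ?_⟩
  calc μ (closedBall y (5 * ρ)) ≤ D * μ (closedBall y ρ) := hD y ρ hρ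
    _ = 2 * D / l * (l / 2 * μ (closedBall y ρ)) := by
      rw [← mul_assoc, div_eq_mul_inv, div_eq_mul_inv]
      congr 1
      calc (D : ℝ≥0∞) = D * ((2 * 2⁻¹) * (l⁻¹ * l)) := by
            rw [ENNReal.mul_inv_cancel two_ne_zero ENNReal.ofNat_ne_top,
              ENNReal.inv_mul_cancel hl hl', one_mul, mul_one]
        _ = _ := by ring
    _ ≤ _ := by
      rw [lintegral_const_mul _ hind]
      gcongr
      exact half_mul_measure_le_setLIntegral_of_mul_lt (ENNReal.mul_lt_of_lt_div hlρ)

variable [ProperSpace X] [IsFiniteMeasureOnCompacts μ]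

theorem lintegral_closedBall_le_maximalFunction_mul (G : X → ℝ≥0∞) (y : X) {ρ : ℝ} (hρ : 0 < ρ) :
    ∫⁻ x in closedBall y ρ, G x ∂μ ≤ maximalFunction μ G y * μ (closedBall y ρ) := by
  rw [← measure_mul_setLAverage _ measure_closedBall_lt_top.ne, mul_comm]
  gcongr
  exact le_iSup₂_of_le ρ hρ le_rfl

variable [BorelSpace X]

theorem lowerSemicontinuous_maximalFunction (G : X → ℝ≥0∞) :
    LowerSemicontinuous (maximalFunction μ G) := by
  intro y l hl
  obtain ⟨ρ, hρ, hlρ⟩ : ∃ ρ > 0, l < ⨍⁻ x in closedBall y ρ, G x ∂μ := by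
    simpa only [maximalFunction, lt_iSup_iff, exists_prop] using hl
  set I := ∫⁻ x in closedBall y ρ, G x ∂μ
  have hlim : Tendsto (fun ρ' => I / μ (closedBall y ρ')) (𝓝[>] ρ)
      (𝓝 (I / μ (closedBall y ρ))) := by
    refine ENNReal.Tendsto.const_div ?_ (.inl measure_closedBall_lt_top.ne)
    rw [← biInter_gt_closedBall y ρ]
    exact tendsto_measure_biInter_gt (fun _ _ => measurableSet_closedBall.nullMeasurableSet)
      (fun _ _ _ h => closedBall_subset_closedBall h)
      ⟨ρ + 1, by simp, measure_closedBall_lt_top.ne⟩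
  rw [setLAverage_eq] at hlρ
  obtain ⟨ρ', hlρ', hρρ' : ρ < ρ'⟩ :=
    ((hlim.eventually_const_lt hlρ).and self_mem_nhdsWithin).exists
  filter_upwards [ball_mem_nhds y (half_pos (sub_pos.2 hρρ'))] with z hz
  set τ := (ρ + ρ') / 2 with hτ
  have hτ0 : 0 < τ := by linarith
  have hdist : dist z y < τ - ρ := by rw [mem_ball] at hz; linarith
  calc l < I / μ (closedBall y ρ') := hlρ'
    _ ≤ (∫⁻ x in closedBall z τ, G x ∂μ) / μ (closedBall z τ) := by
      refine ENNReal.div_le_div (lintegral_mono_set (closedBall_subset_closedBall' ?_))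
        (measure_mono (closedBall_subset_closedBall' ?_))
      · rw [dist_comm]; linarith
      · linarith
    _ = ⨍⁻ x in closedBall z τ, G x ∂μ := (setLAverage_eq _ _ _).symm
    _ ≤ maximalFunction μ G z := le_iSup₂_of_le τ hτ0 le_rfl

theorem measurable_maximalFunction (G : X → ℝ≥0∞) : Measurable (maximalFunction μ G) :=
  (lowerSemicontinuous_maximalFunction G).measurable

theorem lintegral_maximalFunction_rpow_le {D : ℝ≥0}
    (hD : ∀ y ρ, 0 < ρ → μ (closedBall y (5 * ρ)) ≤ D * μ (closedBall y ρ)) (hG : Measurable G)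
    {r : ℝ} (hr : 1 < r) :
    ∫⁻ y, maximalFunction μ G y ^ r ∂μ ≤
      2 ^ r * D * ENNReal.ofReal (r / (r - 1)) * ∫⁻ x, G x ^ r ∂μ := by
  have hr0 : 0 < r := by linarith
  have hr1 : 0 < r - 1 := by linarith
  set ν := μ.withDensity G
  have hweak : ∀ t ∈ Ioi (0 : ℝ),
      μ {y | ENNReal.ofReal t < maximalFunction μ G y} * ENNReal.ofReal (t ^ (r - 1)) ≤
        2 * D * (ν {x | ENNReal.ofReal t < 2 * G x} * ENNReal.ofReal (t ^ (r - 1 - 1))) := by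
    intro t ht
    have ht0 : 0 < t := ht
    rw [withDensity_apply _ (measurableSet_lt measurable_const (hG.const_mul 2)),
      Real.rpow_sub_one ht0.ne' (r - 1), ENNReal.ofReal_div_of_pos ht0]
    refine (mul_le_mul_left (measure_lt_maximalFunction_le hD hG (by simpa using ht0)
      ENNReal.ofReal_ne_top) _).trans_eq ?_
    simp only [div_eq_mul_inv]
    ring
  have hlayer : ∫⁻ t in Ioi (0 : ℝ),
      ν {x | ENNReal.ofReal t < 2 * G x} * ENNReal.ofReal (t ^ (r - 1 - 1)) =
        ENNReal.ofReal (r - 1)⁻¹ * (2 ^ (r - 1) * ∫⁻ x, G x ^ r ∂μ) := by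
    have hdensity := lintegral_withDensity_const_mul_rpow (μ := μ) hG 2 hr1.le
    rw [sub_add_cancel] at hdensity
    rw [← hdensity, lintegral_rpow_eq_lintegral_measure_lt (hG.const_mul 2) hr1, ← mul_assoc,
      ← ENNReal.ofReal_mul (inv_nonneg.2 hr1.le), inv_mul_cancel₀ hr1.ne', ENNReal.ofReal_one,
      one_mul]
  calc ∫⁻ y, maximalFunction μ G y ^ r ∂μ
      = ENNReal.ofReal r * ∫⁻ t in Ioi (0 : ℝ),
          μ {y | ENNReal.ofReal t < maximalFunction μ G y} * ENNReal.ofReal (t ^ (r - 1)) :=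
        lintegral_rpow_eq_lintegral_measure_lt (measurable_maximalFunction G) hr0
    _ ≤ ENNReal.ofReal r * ∫⁻ t in Ioi (0 : ℝ),
          2 * D * (ν {x | ENNReal.ofReal t < 2 * G x} * ENNReal.ofReal (t ^ (r - 1 - 1))) := by
        gcongr ENNReal.ofReal r * ?_
        exact setLIntegral_mono' measurableSet_Ioi hweak
    _ = (2 * 2 ^ (r - 1)) * D * (ENNReal.ofReal r * ENNReal.ofReal (r - 1)⁻¹) *
          ∫⁻ x, G x ^ r ∂μ := by
        rw [lintegral_const_mul' _ _ (by finiteness), hlayer]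
        ring
    _ = _ := by
        rw [← ENNReal.ofReal_mul hr0.le, ← div_eq_mul_inv]
        nth_rw 1 [← ENNReal.rpow_one 2]
        rw [← ENNReal.rpow_add_of_nonneg _ _ zero_le_one hr1.le, add_sub_cancel]

end MaximalFunction

section RieszPotential

variable {X : Type*} [PseudoMetricSpace X] [MeasurableSpace X] {μ : Measure X} {a s N : ℝ}

/-- The Riesz-type potential of `φ` with kernel `dist y x ^ (-a)`, truncated at distance `δ`: it
collects the averages of `φ` over all balls around `x` of radius at least `δ`. -/
def truncatedRieszPotential (μ : Measure X) (a δ : ℝ) (φ : X → ℝ≥0∞) (x : X) : ℝ≥0∞ :=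
  ∫⁻ y, ENNReal.ofReal (max δ (dist y x) ^ (-a)) * φ y ∂μ

/-- The Poisson-type kernel of order `s` at scale `δ` and distance `r`, in a space where a ball of
radius `ρ` has measure of order `ρ ^ N`; its integral is bounded uniformly in `δ`. -/
def poissonTypeKernel (s N δ r : ℝ) : ℝ≥0∞ :=
  ENNReal.ofReal (δ ^ s * max δ r ^ (-(s + N)))

theorem measurable_poissonTypeKernel :
    Measurable fun z : ℝ × ℝ => poissonTypeKernel s N z.1 z.2 := by
  unfold poissonTypeKernel
  fun_prop

theorem lintegral_poissonTypeKernel_mul {δ : ℝ} (hδ : 0 ≤ δ) (G : X → ℝ≥0∞) (y : X) :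
    ∫⁻ x, poissonTypeKernel s N δ (dist x y) * G x ∂μ =
      ENNReal.ofReal (δ ^ s) * truncatedRieszPotential μ (s + N) δ G y := by
  rw [truncatedRieszPotential, ← lintegral_const_mul' _ _ ENNReal.ofReal_ne_top]
  simp_rw [poissonTypeKernel, ENNReal.ofReal_mul (Real.rpow_nonneg hδ s), mul_assoc]

theorem rpow_mul_setLIntegral_closedBall_le_truncatedRieszPotential [OpensMeasurableSpace X]
    (ha : 0 ≤ a) {δ t : ℝ} (hδt : δ ≤ t) {φ : X → ℝ≥0∞} {x : X}
    (hpos : ∀ y, φ y ≠ 0 → 0 < max δ (dist y x)) :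
    ENNReal.ofReal (t ^ (-a)) * ∫⁻ y in closedBall x t, φ y ∂μ ≤
      truncatedRieszPotential μ a δ φ x := by
  rw [← lintegral_const_mul' _ _ ENNReal.ofReal_ne_top]
  refine (setLIntegral_mono' measurableSet_closedBall fun y hy => ?_).trans
    (setLIntegral_le_lintegral (closedBall x t) _)
  by_cases hφy : φ y = 0
  · simp [hφy]
  · gcongr ENNReal.ofReal ?_ * _
    exact Real.rpow_le_rpow_of_nonpos (hpos y hφy) (max_le hδt hy) (neg_nonpos.2 ha)

theorem truncatedRieszPotential_le_lintegral_poissonTypeKernel (h : 0 ≤ s + N) (S : Set X)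
    {φ : X → ℝ≥0∞} (hφ : ∀ y, infDist y S = 0 → φ y = 0) (x : X) :
    truncatedRieszPotential μ (s + N) (infDist x S) φ x ≤ ENNReal.ofReal (2 ^ (s + N)) *
      ∫⁻ y, poissonTypeKernel s N (infDist y S) (dist x y) *
        (φ y / ENNReal.ofReal (infDist y S ^ s)) ∂μ := by
  rw [← lintegral_const_mul' _ _ ENNReal.ofReal_ne_top]
  refine lintegral_mono fun y => ?_
  by_cases hy : infDist y S = 0
  · simp [hφ y hy]
  have hy0 : 0 < infDist y S := lt_of_le_of_ne infDist_nonneg (Ne.symm hy)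
  have hys : 0 < infDist y S ^ s := Real.rpow_pos_of_pos hy0 s
  set m := max (infDist y S) (dist x y)
  set m' := max (infDist x S) (dist y x)
  have hm : 0 < m := lt_max_of_lt_left hy0
  have hmm' : m ≤ 2 * m' := by
    have hlip : infDist y S ≤ infDist x S + dist y x := infDist_le_infDist_add_dist
    have h₁ : infDist x S ≤ m' := le_max_left _ _
    have h₂ : dist y x ≤ m' := le_max_right _ _
    exact max_le (by linarith) (by linarith [dist_comm x y, dist_nonneg (x := y) (y := x)])
  have hm' : 0 < m' := by linarith
  have hker : m' ^ (-(s + N)) ≤ 2 ^ (s + N) * m ^ (-(s + N)) := by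
    have := Real.rpow_le_rpow_of_nonpos hm hmm' (neg_nonpos.2 h)
    rwa [Real.mul_rpow zero_le_two hm'.le, Real.rpow_neg zero_le_two,
      inv_mul_le_iff₀ (by positivity)] at this
  calc ENNReal.ofReal (m' ^ (-(s + N))) * φ y
      ≤ ENNReal.ofReal (2 ^ (s + N) * m ^ (-(s + N))) * φ y := by gcongr
    _ = ENNReal.ofReal (2 ^ (s + N)) * ENNReal.ofReal (m ^ (-(s + N))) *
          (ENNReal.ofReal (infDist y S ^ s) * (φ y / ENNReal.ofReal (infDist y S ^ s))) := by
      rw [ENNReal.mul_div_cancel (by simpa using hys) ENNReal.ofReal_ne_top,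
        ENNReal.ofReal_mul (by positivity)]
    _ = _ := by
      rw [poissonTypeKernel, ENNReal.ofReal_mul hys.le]
      ring

variable [OpensMeasurableSpace X] [SecondCountableTopology X] [SFinite μ]

theorem measurable_truncatedRieszPotential {δ : X → ℝ} (hδ : Measurable δ) {φ : X → ℝ≥0∞}
    (hφ : Measurable φ) : Measurable fun x => truncatedRieszPotential μ a (δ x) φ x := by
  have hker : Measurable fun z : X × X =>
      ENNReal.ofReal (max (δ z.1) (dist z.2 z.1) ^ (-a)) * φ z.2 := by fun_prop
  exact hker.lintegral_prod_right'

theorem lintegral_Ici_rpow_mul_setLIntegral_closedBall (ha : 0 < a) {δ : ℝ} {φ : X → ℝ≥0∞}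
    (hφ : Measurable φ) {x : X} (hpos : ∀ y, φ y ≠ 0 → 0 < max δ (dist y x)) :
    ∫⁻ t in Ici δ, ENNReal.ofReal (t ^ (-a - 1)) * ∫⁻ y in closedBall x t, φ y ∂μ =
      ENNReal.ofReal a⁻¹ * truncatedRieszPotential μ a δ φ x := by
  let w (t : ℝ) (y : X) : ℝ≥0∞ :=
    if dist y x ≤ t then ENNReal.ofReal (t ^ (-a - 1)) * φ y else 0
  have hw : Measurable (Function.uncurry w) :=
    .ite (measurableSet_le (by fun_prop) (by fun_prop)) (by fun_prop) measurable_const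
  have hradius (y : X) : ∫⁻ t in Ici δ, w t y =
      ENNReal.ofReal a⁻¹ * (ENNReal.ofReal (max δ (dist y x) ^ (-a)) * φ y) := by
    by_cases hy : φ y = 0
    · simp [w, hy]
    rw [← mul_assoc, mul_comm (ENNReal.ofReal _), ← ENNReal.ofReal_mul' (inv_nonneg.2 ha.le),
      ← div_eq_mul_inv, ← lintegral_Ici_rpow (hpos y hy) ha, ← lintegral_mul_const _ (by fun_prop),
      max_comm, ← Ici_inter_Ici, ← Measure.restrict_restrict measurableSet_Ici,
      ← lintegral_indicator (μ := volume.restrict (Ici δ)) measurableSet_Ici]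
    rfl
  calc ∫⁻ t in Ici δ, ENNReal.ofReal (t ^ (-a - 1)) * ∫⁻ y in closedBall x t, φ y ∂μ
      = ∫⁻ t in Ici δ, ∫⁻ y, w t y ∂μ := by
        refine lintegral_congr fun t => ?_
        rw [← lintegral_const_mul _ hφ, ← lintegral_indicator measurableSet_closedBall]
        rfl
    _ = ∫⁻ y, (∫⁻ t in Ici δ, w t y) ∂μ := lintegral_lintegral_swap hw.aemeasurable
    _ = _ := by
        simp_rw [hradius]
        exact lintegral_const_mul' _ _ ENNReal.ofReal_ne_top

theorem lintegral_Ici_rpow_mul_setLIntegral_closedBall_rpow_le (ha : 0 < a) {q : ℝ} (hq : 1 ≤ q)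
    {δ : ℝ} (hδ : 0 ≤ δ) {φ : X → ℝ≥0∞} (hφ : Measurable φ) {x : X}
    (hpos : ∀ y, φ y ≠ 0 → 0 < max δ (dist y x)) :
    ∫⁻ t in Ici δ, (ENNReal.ofReal (t ^ (-a)) * ∫⁻ y in closedBall x t, φ y ∂μ) ^ q *
        ENNReal.ofReal t⁻¹ ≤
      ENNReal.ofReal a⁻¹ * truncatedRieszPotential μ a δ φ x ^ q := by
  set U := truncatedRieszPotential μ a δ φ x
  have hrpow (w : ℝ≥0∞) : w ^ q = w ^ (q - 1) * w := by
    nth_rw 3 [← ENNReal.rpow_one w]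
    rw [← ENNReal.rpow_add_of_nonneg _ _ (by linarith) zero_le_one, sub_add_cancel]
  have hb : Measurable fun t => ∫⁻ y in closedBall x t, φ y ∂μ :=
    Monotone.measurable fun t t' htt' => lintegral_mono_set (closedBall_subset_closedBall htt')
  have hle : ∀ t ∈ Ici δ,
      (ENNReal.ofReal (t ^ (-a)) * ∫⁻ y in closedBall x t, φ y ∂μ) ^ q * ENNReal.ofReal t⁻¹ ≤
        U ^ (q - 1) * (ENNReal.ofReal (t ^ (-a - 1)) * ∫⁻ y in closedBall x t, φ y ∂μ) := by
    intro t ht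
    obtain rfl | ht0 := (hδ.trans (mem_Ici.1 ht)).eq_or_lt
    · simp
    rw [hrpow, Real.rpow_sub_one ht0.ne', div_eq_mul_inv, ENNReal.ofReal_mul (by positivity)]
    have hU := rpow_mul_setLIntegral_closedBall_le_truncatedRieszPotential (μ := μ) ha.le ht
      hpos
    calc _ ≤ U ^ (q - 1) * (ENNReal.ofReal (t ^ (-a)) * ∫⁻ y in closedBall x t, φ y ∂μ) *
            ENNReal.ofReal t⁻¹ := by gcongr
      _ = _ := by ring
  calc _ ≤ ∫⁻ t in Ici δ,
        U ^ (q - 1) * (ENNReal.ofReal (t ^ (-a - 1)) * ∫⁻ y in closedBall x t, φ y ∂μ) :=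
        setLIntegral_mono' measurableSet_Ici hle
    _ = U ^ (q - 1) * (ENNReal.ofReal a⁻¹ * U) := by
        rw [lintegral_const_mul _ (by fun_prop),
          lintegral_Ici_rpow_mul_setLIntegral_closedBall ha hφ hpos]
    _ = _ := by rw [hrpow]; ring

end RieszPotential

section HardyInequality

variable {X : Type*} [PseudoMetricSpace X] [ProperSpace X] [MeasurableSpace X] [BorelSpace X]
  {μ : Measure X} [IsFiniteMeasureOnCompacts μ] {s N p : ℝ} {A D : ℝ≥0}

theorem truncatedRieszPotential_le_maximalFunction (hs : 0 < s) (hsN : 0 < s + N)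
    (hA : ∀ y ρ, 0 < ρ → μ (closedBall y ρ) ≤ A * ENNReal.ofReal (ρ ^ N)) {δ : ℝ} (hδ : 0 < δ)
    {G : X → ℝ≥0∞} (hG : Measurable G) (y : X) :
    truncatedRieszPotential μ (s + N) δ G y ≤
      ENNReal.ofReal (s + N) * (ENNReal.ofReal (δ ^ (-s) / s) * (A * maximalFunction μ G y)) := by
  set M := maximalFunction μ G y
  have hball : ∀ t ∈ Ici δ,
      ENNReal.ofReal (t ^ (-(s + N) - 1)) * ∫⁻ x in closedBall y t, G x ∂μ ≤
        ENNReal.ofReal (t ^ (-s - 1)) * (A * M) := by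
    intro t ht
    have ht0 : 0 < t := hδ.trans_le ht
    calc _ ≤ ENNReal.ofReal (t ^ (-(s + N) - 1)) * (M * (A * ENNReal.ofReal (t ^ N))) := by
          gcongr
          exact (lintegral_closedBall_le_maximalFunction_mul G y ht0).trans
            (by gcongr; exact hA y t ht0)
      _ = ENNReal.ofReal (t ^ (-(s + N) - 1) * t ^ N) * (A * M) := by
          rw [ENNReal.ofReal_mul (by positivity)]
          ring
      _ = _ := by
          rw [← Real.rpow_add ht0]
          ring_nf
  calc truncatedRieszPotential μ (s + N) δ G y
      = ENNReal.ofReal (s + N) *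
          (ENNReal.ofReal (s + N)⁻¹ * truncatedRieszPotential μ (s + N) δ G y) := by
        rw [← mul_assoc, ← ENNReal.ofReal_mul hsN.le, mul_inv_cancel₀ hsN.ne', ENNReal.ofReal_one,
          one_mul]
    _ ≤ _ := by
        rw [← lintegral_Ici_rpow_mul_setLIntegral_closedBall hsN hG
            fun _ _ => lt_max_of_lt_left hδ,
          ← lintegral_Ici_rpow hδ hs, ← lintegral_mul_const _ (by fun_prop)]
        gcongr ENNReal.ofReal (s + N) * ?_
        exact setLIntegral_mono' measurableSet_Ici hball

theorem lintegral_poissonTypeKernel_mul_le_maximalFunction (hs : 0 < s) (hsN : 0 < s + N)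
    (hA : ∀ y ρ, 0 < ρ → μ (closedBall y ρ) ≤ A * ENNReal.ofReal (ρ ^ N)) {δ : ℝ} (hδ : 0 ≤ δ)
    {G : X → ℝ≥0∞} (hG : Measurable G) (y : X) :
    ∫⁻ x, poissonTypeKernel s N δ (dist x y) * G x ∂μ ≤
      ENNReal.ofReal ((s + N) / s) * A * maximalFunction μ G y := by
  obtain rfl | hδ0 := hδ.eq_or_lt
  · simp [poissonTypeKernel, Real.zero_rpow hs.ne']
  set M := maximalFunction μ G y
  calc _ = ENNReal.ofReal (δ ^ s) * truncatedRieszPotential μ (s + N) δ G y :=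
        lintegral_poissonTypeKernel_mul hδ G y
    _ ≤ ENNReal.ofReal (δ ^ s) *
          (ENNReal.ofReal (s + N) * (ENNReal.ofReal (δ ^ (-s) / s) * (A * M))) := by
        gcongr
        exact truncatedRieszPotential_le_maximalFunction hs hsN hA hδ0 hG y
    _ = ENNReal.ofReal (δ ^ s * ((s + N) * (δ ^ (-s) / s))) * A * M := by
        rw [ENNReal.ofReal_mul (by positivity), ENNReal.ofReal_mul hsN.le]
        ring
    _ = _ := by
        rw [Real.rpow_neg hδ]
        congr 3
        field_simp

theorem exists_lintegral_poissonTypeKernel_rpow_le (hs : 0 < s) (hsN : 0 < s + N)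
    (hA : ∀ y ρ, 0 < ρ → μ (closedBall y ρ) ≤ A * ENNReal.ofReal (ρ ^ N))
    (hD : ∀ y ρ, 0 < ρ → μ (closedBall y (5 * ρ)) ≤ D * μ (closedBall y ρ)) (hp : 1 < p) :
    ∃ C : ℝ≥0, ∀ δ : X → ℝ, Measurable δ → (∀ y, 0 ≤ δ y) → ∀ h : X → ℝ≥0∞, Measurable h →
      (∫⁻ x, (∫⁻ y, poissonTypeKernel s N (δ y) (dist x y) * h y ∂μ) ^ p ∂μ) ^ (1 / p) ≤
        C * (∫⁻ y, h y ^ p ∂μ) ^ (1 / p) := by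
  have hpq : p.HolderConjugate p.conjExponent := .conjExponent hp
  set q := p.conjExponent
  have hq0 : 0 < 1 / q := one_div_pos.2 hpq.symm.pos
  set B : ℝ≥0∞ := ENNReal.ofReal ((s + N) / s) * A
  set E : ℝ≥0∞ := 2 ^ q * D * ENNReal.ofReal (q / (q - 1))
  have hE : E ≠ ⊤ := by finiteness [hpq.symm.nonneg]
  have hC : B * E ^ (1 / q) ≠ ⊤ := by finiteness
  refine ⟨(B * E ^ (1 / q)).toNNReal, fun δ hδ hδ0 h hh => ?_⟩
  rw [ENNReal.coe_toNNReal hC]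
  have hK : Measurable fun z : X × X => poissonTypeKernel s N (δ z.2) (dist z.1 z.2) :=
    measurable_poissonTypeKernel.comp ((hδ.comp measurable_snd).prodMk measurable_dist)
  refine lintegral_kernel_rpow_le_of_transpose hpq hK (fun g hg => ?_) hh
  calc (∫⁻ y, (∫⁻ x, poissonTypeKernel s N (δ y) (dist x y) * g x ∂μ) ^ q ∂μ) ^ (1 / q)
      ≤ (∫⁻ y, (B * maximalFunction μ g y) ^ q ∂μ) ^ (1 / q) := by
        gcongr with y
        · exact hpq.symm.nonneg
        · exact lintegral_poissonTypeKernel_mul_le_maximalFunction hs hsN hA (hδ0 y) hg y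
    _ = B * (∫⁻ y, maximalFunction μ g y ^ q ∂μ) ^ (1 / q) :=
        lintegral_Lp_const_mul hpq.symm.pos (by finiteness) _
    _ ≤ B * (E * ∫⁻ x, g x ^ q ∂μ) ^ (1 / q) := by
        gcongr
        exact lintegral_maximalFunction_rpow_le hD hg hpq.symm.lt
    _ = _ := by rw [ENNReal.mul_rpow_of_nonneg _ _ hq0.le, mul_assoc B]

theorem exists_lintegral_truncatedRieszPotential_infDist_rpow_le (hs : 0 < s) (hsN : 0 < s + N)
    (hA : ∀ y ρ, 0 < ρ → μ (closedBall y ρ) ≤ A * ENNReal.ofReal (ρ ^ N))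
    (hD : ∀ y ρ, 0 < ρ → μ (closedBall y (5 * ρ)) ≤ D * μ (closedBall y ρ)) (hp : 1 < p)
    (S : Set X) :
    ∃ C : ℝ≥0, ∀ φ : X → ℝ≥0∞, Measurable φ → (∀ y, infDist y S = 0 → φ y = 0) →
      (∫⁻ x, truncatedRieszPotential μ (s + N) (infDist x S) φ x ^ p ∂μ) ^ (1 / p) ≤
        C * (∫⁻ y, (φ y / ENNReal.ofReal (infDist y S ^ s)) ^ p ∂μ) ^ (1 / p) := by
  obtain ⟨C, hC⟩ := exists_lintegral_poissonTypeKernel_rpow_le hs hsN hA hD hp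
  refine ⟨(2 ^ (s + N) : ℝ).toNNReal * C, fun φ hφ hφ0 => ?_⟩
  have hdist : Measurable fun y => infDist y S := measurable_infDist
  set h := fun y => φ y / ENNReal.ofReal (infDist y S ^ s)
  have hh : Measurable h := hφ.div (hdist.pow_const s).ennreal_ofReal
  calc (∫⁻ x, truncatedRieszPotential μ (s + N) (infDist x S) φ x ^ p ∂μ) ^ (1 / p)
      ≤ (∫⁻ x, (ENNReal.ofReal (2 ^ (s + N)) *
          ∫⁻ y, poissonTypeKernel s N (infDist y S) (dist x y) * h y ∂μ) ^ p ∂μ) ^ (1 / p) := by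
        gcongr with x
        exact truncatedRieszPotential_le_lintegral_poissonTypeKernel hsN.le S hφ0 x
    _ = ENNReal.ofReal (2 ^ (s + N)) * (∫⁻ x, (∫⁻ y,
          poissonTypeKernel s N (infDist y S) (dist x y) * h y ∂μ) ^ p ∂μ) ^ (1 / p) :=
        lintegral_Lp_const_mul (by linarith) ENNReal.ofReal_ne_top _
    _ ≤ ENNReal.ofReal (2 ^ (s + N)) * (C * (∫⁻ y, h y ^ p ∂μ) ^ (1 / p)) := by
        gcongr
        exact hC _ hdist (fun _ => infDist_nonneg) h hh
    _ = _ := by rw [ENNReal.coe_mul, mul_assoc, ENNReal.ofReal]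

end HardyInequality

section LocalApproximation

theorem subset_or_disjoint_of_disjoint_frontier {X : Type*} [TopologicalSpace X] {B Ω : Set X}
    (hB : IsPreconnected B) (h : Disjoint B (frontier Ω)) : B ⊆ Ω ∨ Disjoint B Ω := by
  have hdisj : Disjoint (interior Ω) (closure Ω)ᶜ :=
    disjoint_compl_right_iff_subset.2 (interior_subset.trans subset_closure)
  have hcov : B ⊆ interior Ω ∪ (closure Ω)ᶜ := fun y hy => by
    have hy' : y ∉ closure Ω \ interior Ω := h.notMem_of_mem_left hy
    by_cases hyc : y ∈ closure Ω
    · exact .inl (by_contra fun hyi => hy' ⟨hyc, hyi⟩)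
    · exact .inr hyc
  refine (hB.subset_or_subset isOpen_interior isClosed_closure.isOpen_compl hdisj hcov).imp
    (·.trans interior_subset) fun hBΩ => ?_
  exact (disjoint_compl_left_iff_subset.2 subset_closure).mono_left hBΩ

theorem infDist_frontier_pos {X : Type*} [PseudoMetricSpace X] {Ω : Set X} (hΩ : IsOpen Ω)
    (hne : (frontier Ω).Nonempty) {y : X} (hy : y ∈ Ω) : 0 < infDist y (frontier Ω) :=
  (isClosed_frontier.notMem_iff_infDist_pos hne).1 fun hy' =>
    (hΩ.inter_frontier_eq ▸ ⟨hy, hy'⟩ : y ∈ (∅ : Set X))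

variable {n k : ℕ} {u : ℝ} {f g : Rn n → ℝ} {x : Rn n} {r : ℝ} {Ω : Set (Rn n)}

theorem localApprox_congr (h : EqOn f g (closedBall x r)) :
    localApprox k u f x r = localApprox k u g x r := by
  have (P : MvPolynomial (Fin n) ℝ) :
      ∫⁻ y in closedBall x r, ENNReal.ofReal |f y - MvPolynomial.eval y P| ^ u =
        ∫⁻ y in closedBall x r, ENNReal.ofReal |g y - MvPolynomial.eval y P| ^ u :=
    setLIntegral_congr_fun measurableSet_closedBall fun y hy => by simp only [h hy]
  simp only [localApprox, this]

theorem localApprox_le (k : ℕ) (u : ℝ) (f : Rn n → ℝ) (x : Rn n) (r : ℝ) :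
    localApprox k u f x r ≤
      ((volume (closedBall x r))⁻¹ * ∫⁻ y in closedBall x r, ENNReal.ofReal |f y| ^ u) ^ (1 / u) :=
  (iInf₂_le (0 : MvPolynomial (Fin n) ℝ) (by simp)).trans (by simp)

theorem localApprox_zero (hu : 0 < u) : localApprox k u (0 : Rn n → ℝ) x r = 0 :=
  le_zero_iff.1 <| (localApprox_le k u 0 x r).trans <| by
    simp [ENNReal.zero_rpow_of_pos hu, hu]

theorem localApprox_indicator_le (hu : 0 < u) (hr : r < infDist x (frontier Ω)) :
    localApprox k u (Ω.indicator f) x r ≤ localApprox k u f x r := by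
  have hB : IsPreconnected (closedBall x r) := (convex_closedBall x r).isPreconnected
  rcases subset_or_disjoint_of_disjoint_frontier hB (disjoint_closedBall_of_lt_infDist hr) with
    hsub | hdisj
  · exact (localApprox_congr fun y hy => indicator_of_mem (hsub hy) f).le
  · rw [localApprox_congr (g := 0) fun y hy =>
      indicator_of_notMem (hdisj.notMem_of_mem_left hy) f, localApprox_zero hu]
    exact zero_le

theorem rpow_mul_localApprox_one_le (s : ℝ) (k : ℕ) (f : Rn n → ℝ) (x : Rn n) (hr : 0 < r) :
    ENNReal.ofReal (r ^ (-s)) * localApprox k 1 f x r ≤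
      ENNReal.ofReal (r ^ (-(s + n))) * ∫⁻ y in closedBall x r, ENNReal.ofReal |f y| := by
  have hvol : (volume (closedBall x r))⁻¹ ≤ ENNReal.ofReal (r ^ (-(n : ℝ))) := by
    rw [Real.volume_pi_closedBall _ hr.le, Fintype.card_fin,
      ← ENNReal.ofReal_inv_of_pos (by positivity), Real.rpow_neg hr.le, Real.rpow_natCast]
    gcongr
    linarith
  calc ENNReal.ofReal (r ^ (-s)) * localApprox k 1 f x r
      ≤ ENNReal.ofReal (r ^ (-s)) * ((volume (closedBall x r))⁻¹ *
          ∫⁻ y in closedBall x r, ENNReal.ofReal |f y|) := by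
        gcongr
        simpa using localApprox_le k 1 f x r
    _ ≤ ENNReal.ofReal (r ^ (-s)) * (ENNReal.ofReal (r ^ (-(n : ℝ))) *
          ∫⁻ y in closedBall x r, ENNReal.ofReal |f y|) := by gcongr
    _ = _ := by
        rw [← mul_assoc, ← ENNReal.ofReal_mul (by positivity), ← Real.rpow_add hr, neg_add]

end LocalApproximation

section ZeroExtension

variable {n : ℕ} {s p q : ℝ} {f : Rn n → ℝ} {Ω : Set (Rn n)}

/-- The inner `L^q(dt/t)` norm `g` of the Triebel–Lizorkin norm, as a function of the point. -/
def tlDensity (s q : ℝ) (f : Rn n → ℝ) (x : Rn n) : ℝ≥0∞ :=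
  (∫⁻ t in Ioo (0 : ℝ) 1, (ENNReal.ofReal (t ^ (-s)) * localApprox (⌊s⌋₊ + 1) 1 f x t) ^ q *
    ENNReal.ofReal t⁻¹) ^ (1 / q)

theorem tlNorm_eq_add_lintegral_tlDensity (s p q : ℝ) (f : Rn n → ℝ) :
    tlNorm s p q f = (∫⁻ x, ENNReal.ofReal |f x| ^ p) ^ (1 / p) +
      (∫⁻ x, tlDensity s q f x ^ p) ^ (1 / p) :=
  rfl

theorem tlNorm_zero (s : ℝ) (hp : 0 < p) (hq : 0 < q) : tlNorm s p q (0 : Rn n → ℝ) = 0 := by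
  simp [tlNorm, localApprox_zero one_pos, hp, hq]

theorem lintegral_Ici_localApprox_rpow_le_truncatedRieszPotential (hs : 0 < s) (hq : 1 ≤ q) (k : ℕ)
    (hf : Measurable f) {δ : ℝ} (hδ : 0 ≤ δ) {x : Rn n}
    (hpos : ∀ y, f y ≠ 0 → 0 < max δ (dist y x)) :
    ∫⁻ t in Ici δ, (ENNReal.ofReal (t ^ (-s)) * localApprox k 1 f x t) ^ q * ENNReal.ofReal t⁻¹ ≤
      ENNReal.ofReal (s + n)⁻¹ *
        truncatedRieszPotential volume (s + n) δ (fun y => ENNReal.ofReal |f y|) x ^ q := by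
  refine le_trans (setLIntegral_mono' measurableSet_Ici fun t ht => ?_)
    (lintegral_Ici_rpow_mul_setLIntegral_closedBall_rpow_le (by positivity) hq hδ (by fun_prop)
      fun y hy => hpos y fun h => hy (by simp [h]))
  obtain rfl | ht0 := (hδ.trans (mem_Ici.1 ht)).eq_or_lt
  · simp
  · have := rpow_mul_localApprox_one_le s k f x ht0
    gcongr

theorem tlDensity_indicator_le (hs : 0 < s) (hq : 1 ≤ q) (hf : Measurable (Ω.indicator f))
    (hΩ : ∀ y ∈ Ω, 0 < infDist y (frontier Ω)) (x : Rn n) :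
    tlDensity s q (Ω.indicator f) x ≤ tlDensity s q f x +
      ENNReal.ofReal (s + n)⁻¹ ^ (1 / q) * truncatedRieszPotential volume (s + n)
        (infDist x (frontier Ω)) (fun y => ENNReal.ofReal |Ω.indicator f y|) x := by
  have hq0 : 0 < q := by linarith
  set d := infDist x (frontier Ω)
  set U := truncatedRieszPotential volume (s + n) d (fun y => ENNReal.ofReal |Ω.indicator f y|) x
  have hpos (y : Rn n) (hy : Ω.indicator f y ≠ 0) : 0 < max d (dist y x) := by
    have hlip : infDist y (frontier Ω) ≤ d + dist y x := infDist_le_infDist_add_dist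
    by_contra! hle
    linarith [hΩ y (mem_of_indicator_ne_zero hy), (max_le_iff.1 hle).1, (max_le_iff.1 hle).2]
  let e (g : Rn n → ℝ) (t : ℝ) : ℝ≥0∞ :=
    (ENNReal.ofReal (t ^ (-s)) * localApprox (⌊s⌋₊ + 1) 1 g x t) ^ q * ENNReal.ofReal t⁻¹
  have hfar : ∫⁻ t in Ioo (0 : ℝ) 1 ∩ Ici d, e (Ω.indicator f) t ≤
      ENNReal.ofReal (s + n)⁻¹ * U ^ q :=
    (lintegral_mono_set inter_subset_right).trans
      (lintegral_Ici_localApprox_rpow_le_truncatedRieszPotential hs hq _ hf infDist_nonneg hpos)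
  have hnear : ∫⁻ t in Ioo (0 : ℝ) 1 \ Ici d, e (Ω.indicator f) t ≤
      ∫⁻ t in Ioo (0 : ℝ) 1, e f t := by
    refine (setLIntegral_mono' (measurableSet_Ioo.diff measurableSet_Ici) fun t ht => ?_).trans
      (lintegral_mono_set sdiff_subset)
    have := localApprox_indicator_le (k := ⌊s⌋₊ + 1) (f := f) one_pos (not_le.1 ht.2)
    dsimp only [e]
    gcongr
  calc tlDensity s q (Ω.indicator f) x
      = ((∫⁻ t in Ioo (0 : ℝ) 1 \ Ici d, e (Ω.indicator f) t) +
          ∫⁻ t in Ioo (0 : ℝ) 1 ∩ Ici d, e (Ω.indicator f) t) ^ (1 / q) := by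
        rw [add_comm, lintegral_inter_add_sdiff _ _ measurableSet_Ici, tlDensity]
    _ ≤ ((∫⁻ t in Ioo (0 : ℝ) 1, e f t) + ENNReal.ofReal (s + n)⁻¹ * U ^ q) ^ (1 / q) := by
        gcongr
    _ ≤ _ := ENNReal.rpow_add_le_add_rpow _ _ (by positivity) ((div_le_one hq0).2 hq)
    _ = _ := by
        rw [ENNReal.mul_rpow_of_nonneg _ _ (by positivity), ← ENNReal.rpow_mul,
          mul_one_div_cancel hq0.ne', ENNReal.rpow_one, tlDensity]

theorem volume_closedBall_five_mul_le (y : Rn n) (ρ : ℝ) (hρ : 0 < ρ) :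
    volume (closedBall y (5 * ρ)) ≤ ((5 ^ n : ℝ≥0) : ℝ≥0∞) * volume (closedBall y ρ) := by
  rw [Real.volume_pi_closedBall _ hρ.le, Real.volume_pi_closedBall _ (by positivity),
    Fintype.card_fin, mul_left_comm, mul_pow, ENNReal.ofReal_mul (by positivity)]
  simp [ENNReal.ofReal_pow]

theorem volume_closedBall_le_mul_rpow (y : Rn n) (ρ : ℝ) (hρ : 0 < ρ) :
    volume (closedBall y ρ) ≤ ((2 ^ n : ℝ≥0) : ℝ≥0∞) * ENNReal.ofReal (ρ ^ (n : ℝ)) := by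
  rw [Real.volume_pi_closedBall _ hρ.le, Fintype.card_fin, mul_pow,
    ENNReal.ofReal_mul (by positivity), Real.rpow_natCast]
  simp [ENNReal.ofReal_pow]

theorem exists_lintegral_tlDensity_indicator_rpow_le (hΩ : IsOpen Ω) (hne : (frontier Ω).Nonempty)
    (hp : 1 < p) (hq : 1 ≤ q) (hs : 0 < s) :
    ∃ C : ℝ≥0, ∀ f : Rn n → ℝ, Measurable f →
      (∫⁻ x, tlDensity s q (Ω.indicator f) x ^ p) ^ (1 / p) ≤
        (∫⁻ x, tlDensity s q f x ^ p) ^ (1 / p) + C * (∫⁻ y in Ω,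
          ENNReal.ofReal (|f y| ^ p / infDist y (frontier Ω) ^ (s * p))) ^ (1 / p) := by
  have hp0 : 0 < p := by linarith
  have hpos : ∀ y ∈ Ω, 0 < infDist y (frontier Ω) := fun y => infDist_frontier_pos hΩ hne
  obtain ⟨C, hC⟩ := exists_lintegral_truncatedRieszPotential_infDist_rpow_le (μ := volume) hs
    (by positivity) volume_closedBall_le_mul_rpow volume_closedBall_five_mul_le hp (frontier Ω)
  set K : ℝ≥0∞ := ENNReal.ofReal (s + n)⁻¹ ^ (1 / q)
  have hK : K ≠ ⊤ := ENNReal.rpow_ne_top_of_nonneg (by positivity) ENNReal.ofReal_ne_top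
  refine ⟨K.toNNReal * C, fun f hf => ?_⟩
  have hfΩ : Measurable (Ω.indicator f) := hf.indicator hΩ.measurableSet
  set φ : Rn n → ℝ≥0∞ := fun y => ENNReal.ofReal |Ω.indicator f y|
  have hφ : Measurable φ := by fun_prop
  have hφ0 (y : Rn n) (hy : infDist y (frontier Ω) = 0) : φ y = 0 := by
    have hyΩ : y ∉ Ω := fun h => (hpos y h).ne' hy
    simp [φ, hyΩ]
  set U : Rn n → ℝ≥0∞ := fun x =>
    truncatedRieszPotential volume (s + n) (infDist x (frontier Ω)) φ x
  have hU : Measurable U := measurable_truncatedRieszPotential measurable_infDist hφ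
  calc (∫⁻ x, tlDensity s q (Ω.indicator f) x ^ p) ^ (1 / p)
      ≤ (∫⁻ x, (tlDensity s q f x + K * U x) ^ p) ^ (1 / p) := by
        gcongr with x
        exact tlDensity_indicator_le hs hq hfΩ hpos x
    _ ≤ (∫⁻ x, tlDensity s q f x ^ p) ^ (1 / p) + (∫⁻ x, (K * U x) ^ p) ^ (1 / p) :=
        lintegral_Lp_add_le_of_measurable_right hp.le _ (hU.const_mul K)
    _ ≤ _ := by
        rw [lintegral_Lp_const_mul hp0 hK, ENNReal.coe_mul, ENNReal.coe_toNNReal hK,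
          mul_assoc, ← lintegral_indicator_div_rpow hΩ.measurableSet hpos hp0]
        gcongr
        exact hC φ hφ hφ0

end ZeroExtension

theorem zero_extension_hardy_general {n : ℕ} {Ω : Set (Rn n)} (hΩ : IsOpen Ω) {p q s : ℝ}
    (hp : 1 < p) (hq : 1 ≤ q) (hs : 0 < s) :
    ∃ c > 0, ∀ f : Rn n → ℝ, Measurable f →
      tlNorm s p q (Ω.indicator f) ≤ ENNReal.ofReal c *
        (tlNorm s p q f + (∫⁻ y in Ω,
          ENNReal.ofReal (|f y| ^ p / infDist y (frontier Ω) ^ (s * p))) ^ (1 / p)) := by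
  rcases (frontier Ω).eq_empty_or_nonempty with hempty | hne
  · refine ⟨1, one_pos, fun f _ => ?_⟩
    rcases frontier_eq_empty_iff.1 hempty with rfl | rfl
    · rw [indicator_empty', tlNorm_zero s (by linarith) (by linarith)]
      exact zero_le
    · simp
  obtain ⟨C, hC⟩ := exists_lintegral_tlDensity_indicator_rpow_le hΩ hne hp hq hs
  refine ⟨1 + C, by positivity, fun f hf => ?_⟩
  set H := (∫⁻ y in Ω, ENNReal.ofReal (|f y| ^ p / infDist y (frontier Ω) ^ (s * p))) ^ (1 / p)
  have hLp : (∫⁻ x, ENNReal.ofReal |Ω.indicator f x| ^ p) ^ (1 / p) ≤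
      (∫⁻ x, ENNReal.ofReal |f x| ^ p) ^ (1 / p) := by
    gcongr (∫⁻ x, ENNReal.ofReal ?_ ^ p) ^ (1 / p) with x
    exact norm_indicator_le_norm_self f x
  calc tlNorm s p q (Ω.indicator f) ≤ tlNorm s p q f + C * H := by
        simp only [tlNorm_eq_add_lintegral_tlDensity, add_assoc]
        exact add_le_add hLp (hC f hf)
    _ ≤ (1 + C) * (tlNorm s p q f + H) := by
        rw [add_mul, one_mul]
        gcongr
        · exact le_self_add
        · exact le_add_self
    _ = _ := by
        rw [ENNReal.ofReal_add zero_le_one C.coe_nonneg, ENNReal.ofReal_one,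
          ENNReal.ofReal_coe_nnreal]

/-- **Extension by zero and the Hardy term** (Proposition 4.1). Let `Ω ⊆ ℝⁿ` (`n ≥ 2`)
be a domain with `κ`-porous boundary, `1 < p < ∞`, `1 ≤ q < ∞`, `s > 0`. Then there is
`c > 0` such that for every `f ∈ F^s_{pq}(ℝⁿ)`,
`‖f χ_Ω‖_{F^s_{pq}} ≤ c (‖f‖_{F^s_{pq}} + (∫_Ω |f|^p / dist(·,∂Ω)^{sp})^{1/p})`. -/
theorem zero_extension_hardy {n : ℕ} (hn : 2 ≤ n) (Ω : Set (Rn n))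
    (hΩo : IsOpen Ω) (hΩc : IsConnected Ω) (κ : ℝ) (hpor : IsPorous κ (frontier Ω))
    (p q s : ℝ) (hp : 1 < p) (hq : 1 ≤ q) (hs : 0 < s) :
    ∃ c > 0, ∀ f : Rn n → ℝ, Measurable f → tlNorm s p q f < ⊤ →
      tlNorm s p q (Ω.indicator f) ≤ ENNReal.ofReal c *
        (tlNorm s p q f +
          (∫⁻ y in Ω,
            ENNReal.ofReal (|f y| ^ p / infDist y (frontier Ω) ^ (s * p))) ^ (1/p)) := by
  obtain ⟨c, hc, h⟩ := zero_extension_hardy_general hΩo hp hq hs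
  exact ⟨c, hc, fun f hf _ => h f hf⟩
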